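/- For every density operator ρ on a finite-dimensional n-partite Hilbert space H^{A_1}⊗⋯⊗H^{A_n} (n ≥ 3), I'(A_1:A_2:⋯:A_n) − I'(A_1:A_2:⋯:A_{n−1}) = Σ_{i=1}^{n−1} ( S(Ā_i) + S(Ā_n) − S(A_1A_2⋯A_n) − S(complement of A_iA_n) ) ≥ 0; in particular for n = 3, I'(A:B:C) − I'(A:B) = (S(AB) + S(BC) − S(ABC) − S(B)) + (S(AB) + S(AC) − S(ABC) − S(A)) ≥ 0. -/

import Mathlib

open scoped BigOperators ComplexOrder
open Matrix

noncomputable section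

/-- The function `x ↦ -x·log₂ x` (with the convention `0·log₂ 0 = 0`). -/
def negxlog2 (x : ℝ) : ℝ := -(x * Real.logb 2 x)

/-- The von Neumann entropy (base 2), `S(ρ) = -Tr(ρ log₂ ρ)`, computed as the sum of
`-λ log₂ λ` over the eigenvalues of a Hermitian matrix (junk value `0` otherwise). -/
def vnEntropy {n : Type} [Fintype n] [DecidableEq n] (ρ : Matrix n n ℂ) : ℝ :=
  if h : ρ.IsHermitian then ∑ i, negxlog2 (h.eigenvalues i) else 0

/-- The Tsallis q-entropy `S_q(ρ) = (1 - Tr ρ^q)/(q-1)`, computed via eigenvalues. -/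
def tsallisEntropy (q : ℝ) {n : Type} [Fintype n] [DecidableEq n] (ρ : Matrix n n ℂ) : ℝ :=
  if h : ρ.IsHermitian then (1 - ∑ i, (h.eigenvalues i) ^ q) / (q - 1) else 0

/-- A density operator: positive semidefinite with unit trace. -/
def IsDensity {n : Type} [Fintype n] [DecidableEq n] (ρ : Matrix n n ℂ) : Prop :=
  ρ.PosSemidef ∧ ρ.trace = 1

/-- rank-one projection `|ψ⟩⟨ψ|`. -/
def outer {α : Type} (ψ : α → ℂ) : Matrix α α ℂ :=
  fun a b => ψ a * (starRingEnd ℂ) (ψ b)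

section multi

variable {ι : Type} [Fintype ι] [DecidableEq ι] {d : ι → Type}
  [∀ i, Fintype (d i)] [∀ i, DecidableEq (d i)]

/-- Combine an assignment of basis indices on the parties in `s` with one on the
complementary parties. -/
def combine (s : Finset ι) (x : (i : {j // j ∈ s}) → d i.1) (z : (i : {j // j ∉ s}) → d i.1)
    (i : ι) : d i :=
  if h : i ∈ s then x ⟨i, h⟩ else z ⟨i, h⟩

/-- The reduced state on the parties in `s`: partial trace over the complementary parties. -/
def pTr (ρ : Matrix (∀ i, d i) (∀ i, d i) ℂ) (s : Finset ι) :
    Matrix ((i : {j // j ∈ s}) → d i.1) ((i : {j // j ∈ s}) → d i.1) ℂ :=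
  fun x y => ∑ z : (i : {j // j ∉ s}) → d i.1, ρ (combine s x z) (combine s y z)

/-- von Neumann entropy of the reduced state on `s`. -/
def Sv (ρ : Matrix (∀ i, d i) (∀ i, d i) ℂ) (s : Finset ι) : ℝ := vnEntropy (pTr ρ s)

/-- Tsallis q-entropy of the reduced state on `s`. -/
def Sq (q : ℝ) (ρ : Matrix (∀ i, d i) (∀ i, d i) ℂ) (s : Finset ι) : ℝ :=
  tsallisEntropy q (pTr ρ s)

/-- Multipartite quantum mutual information `I(X₁:⋯:X_k) = Σ_s S(X_s) - S(X₁⋯X_k)` of a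
partition `P` (each block a finset of parties, treated as a single party). -/
def MI (ρ : Matrix (∀ i, d i) (∀ i, d i) ℂ) (P : Finset (Finset ι)) : ℝ :=
  (∑ X ∈ P, Sv ρ X) - Sv ρ (P.sup id)

/-- Dual multipartite quantum mutual information
`I'(X₁:⋯:X_k) = Σ_s S(X̄_s) - (k-1) S(X₁⋯X_k)`, where `X̄_s` is the union of all blocks
other than `X_s`. -/
def MI' (ρ : Matrix (∀ i, d i) (∀ i, d i) ℂ) (P : Finset (Finset ι)) : ℝ :=
  (∑ X ∈ P, Sv ρ (P.sup id \ X)) - ((P.card : ℝ) - 1) * Sv ρ (P.sup id)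

/-- Tsallis multipartite quantum mutual information. -/
def MIq (q : ℝ) (ρ : Matrix (∀ i, d i) (∀ i, d i) ℂ) (P : Finset (Finset ι)) : ℝ :=
  (∑ X ∈ P, Sq q ρ X) - Sq q ρ (P.sup id)

/-- Tsallis dual multipartite quantum mutual information. -/
def MIq' (q : ℝ) (ρ : Matrix (∀ i, d i) (∀ i, d i) ℂ) (P : Finset (Finset ι)) : ℝ :=
  (∑ X ∈ P, Sq q ρ (P.sup id \ X)) - ((P.card : ℝ) - 1) * Sq q ρ (P.sup id)

/-- The finest partition of the set `s` of parties: each party its own block. -/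
def finest (s : Finset ι) : Finset (Finset ι) := s.image fun i => {i}

end multi

/-- A partition (of a subsystem): nonempty pairwise disjoint blocks. -/
def IsPartition {ι : Type} [DecidableEq ι] (P : Finset (Finset ι)) : Prop :=
  (∀ X ∈ P, X.Nonempty) ∧ (P : Set (Finset ι)).PairwiseDisjoint id

/-- One coarsening step: (a) discarding whole blocks, (b) merging blocks into one block,
(c) discarding some parties from within a block containing at least two parties. -/
inductive CoarserStep {ι : Type} [DecidableEq ι] : Finset (Finset ι) → Finset (Finset ι) → Prop
  | discard {P Q : Finset (Finset ι)} (hQP : Q ⊆ P) (hQ : Q.Nonempty) : CoarserStep P Q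
  | merge (P T : Finset (Finset ι)) (hT : T ⊆ P) (hT' : T.Nonempty) :
      CoarserStep P (insert (T.sup id) (P \ T))
  | shrink (P : Finset (Finset ι)) (X X' : Finset ι) (hX : X ∈ P) (h2 : 2 ≤ X.card)
      (hsub : X' ⊆ X) (hne : X'.Nonempty) : CoarserStep P (insert X' (P.erase X))

/-- `Coarser P Q` : the partition `Q` is coarser than `P` (`P ≻ Q`). -/
def Coarser {ι : Type} [DecidableEq ι] (P Q : Finset (Finset ι)) : Prop :=
  Relation.ReflTransGen CoarserStep P Q

end

/-!
Everything rests on the monotonicity of the relative entropy under restriction to a subsystem.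
For `t ≥ 0` the maximum over `X` of `2 Re tr(X* ρ) - tr(X X* σ) - t tr(X* X ρ)` is
`∑ |⟨e_q, e_p⟩|² p² / (q + t p)`, summed over the eigenvalues `q` of `σ` and `p` of `ρ`. Observables
of a subsystem are observables of the full system with the same expectations, so restriction can
only lower this maximum. Integrating in `t` gives the same inequality for
`∑ |⟨e_q, e_p⟩|² p (log (q + t p) - log q)`, which differs from `S(ρ ‖ σ) + tr ρ log t` by a
quantity that vanishes as `t → ∞`.

For sets `s`, `t` of parties, `S(ρ_{s ∪ t} ‖ ρ_s ⊗ 1) = S(s) - S(s ∪ t)` restricts to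
`S(ρ_t ‖ ρ_{s ∩ t} ⊗ 1) = S(s ∩ t) - S(t)`, and monotonicity becomes strong subadditivity. The
difference of dual mutual informations is a sum of instances of it, one for each pair of sets
`s \ {i}`, `s \ {k}`, where `k` is the party removed from `s`.
-/

open Filter Topology

section Support

variable {n : Type*} [Fintype n]

/-- The support of `ρ` is contained in the support of `σ`, for positive semidefinite `ρ`, `σ`:
the kernel of `σ` is contained in the kernel of `ρ`. -/
def SupportLE (ρ σ : Matrix n n ℂ) : Prop :=
  ∀ Y : Matrix n n ℂ, σ * Y = 0 → ρ * Y = 0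

theorem mul_eq_zero_iff_trace_mul_mul_conjTranspose_eq_zero {σ : Matrix n n ℂ}
    (hσ : σ.PosSemidef) (Y : Matrix n n ℂ) : σ * Y = 0 ↔ (Y * Yᴴ * σ).trace = 0 := by
  classical
  open scoped MatrixOrder in
  obtain ⟨B, rfl⟩ := CStarAlgebra.nonneg_iff_eq_star_mul_self.mp hσ.nonneg
  rw [star_eq_conjTranspose, conjTranspose_mul_self_mul_eq_zero,
    ← trace_conjTranspose_mul_self_eq_zero_iff, conjTranspose_mul, Matrix.mul_assoc Y,
    Matrix.trace_mul_comm Y]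
  simp only [Matrix.mul_assoc]

end Support

section Spectral

variable {n : Type*} [Fintype n] [DecidableEq n] {ρ σ : Matrix n n ℂ}

/-- The matrix of `X` from an eigenbasis of `ρ` to an eigenbasis of `σ`. -/
noncomputable def eigenCoords (hσ : σ.IsHermitian) (hρ : ρ.IsHermitian) (X : Matrix n n ℂ) :
    Matrix n n ℂ :=
  star (hσ.eigenvectorUnitary : Matrix n n ℂ) * X * hρ.eigenvectorUnitary

theorem eigenCoords_surjective (hσ : σ.IsHermitian) (hρ : ρ.IsHermitian) :
    Function.Surjective (eigenCoords hσ hρ) := fun Y =>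
  ⟨hσ.eigenvectorUnitary * Y * star (hρ.eigenvectorUnitary : Matrix n n ℂ), by
    simp only [eigenCoords, Matrix.mul_assoc, Unitary.coe_star_mul_self, Matrix.mul_one]
    rw [← Matrix.mul_assoc, Unitary.coe_star_mul_self, Matrix.one_mul]⟩

theorem trace_conjTranspose_mul_cfc_mul_mul_cfc (hσ : σ.IsHermitian) (hρ : ρ.IsHermitian)
    (g f : ℝ → ℝ) (X Z : Matrix n n ℂ) :
    (Xᴴ * cfc g σ * Z * cfc f ρ).trace =
      ∑ j, ∑ i, star (eigenCoords hσ hρ X j i) * eigenCoords hσ hρ Z j i *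
        (g (hσ.eigenvalues j) * f (hρ.eigenvalues i) : ℝ) := by
  have trace_eq_coords : (Xᴴ * cfc g σ * Z * cfc f ρ).trace =
      ((eigenCoords hσ hρ X)ᴴ * (diagonal (RCLike.ofReal ∘ g ∘ hσ.eigenvalues) *
        eigenCoords hσ hρ Z * diagonal (RCLike.ofReal ∘ f ∘ hρ.eigenvalues))).trace := by
    rw [hσ.cfc_eq, hρ.cfc_eq, IsHermitian.cfc, IsHermitian.cfc, Unitary.conjStarAlgAut_apply,
      Unitary.conjStarAlgAut_apply, eigenCoords, eigenCoords, ← Matrix.mul_assoc, trace_mul_comm]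
    simp only [star_eq_conjTranspose, conjTranspose_mul, conjTranspose_conjTranspose,
      Matrix.mul_assoc]
  rw [trace_eq_coords, Finset.sum_comm]
  simp only [trace, diag_apply, mul_apply (M := (eigenCoords hσ hρ X)ᴴ), conjTranspose_apply,
    mul_diagonal, diagonal_mul, Function.comp_apply, Complex.coe_algebraMap, Complex.ofReal_mul]
  exact Finset.sum_congr rfl fun i _ => Finset.sum_congr rfl fun j _ => by ring

/-- The sum of `F q p` over the pairs of eigenvalues `q` of `σ` and `p` of `ρ`, weighted by the
transition probabilities `|⟨e_q, e_p⟩|²` between the eigenvectors. -/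
noncomputable def spectralSum (hσ : σ.IsHermitian) (hρ : ρ.IsHermitian) (F : ℝ → ℝ → ℝ) : ℝ :=
  ∑ j, ∑ i, Complex.normSq (eigenCoords hσ hρ 1 j i) * F (hσ.eigenvalues j) (hρ.eigenvalues i)

theorem spectralSum_sub (hσ : σ.IsHermitian) (hρ : ρ.IsHermitian) (F G : ℝ → ℝ → ℝ) :
    spectralSum hσ hρ (fun q p => F q p - G q p) = spectralSum hσ hρ F - spectralSum hσ hρ G := by
  simp only [spectralSum, mul_sub, Finset.sum_sub_distrib]

theorem spectralSum_mul_const (hσ : σ.IsHermitian) (hρ : ρ.IsHermitian) (F : ℝ → ℝ → ℝ) (c : ℝ) :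
    spectralSum hσ hρ (fun q p => F q p * c) = spectralSum hσ hρ F * c := by
  simp only [spectralSum, ← mul_assoc, Finset.sum_mul]

theorem trace_cfc_mul_cfc_re (hσ : σ.IsHermitian) (hρ : ρ.IsHermitian) (g f : ℝ → ℝ) :
    (cfc g σ * cfc f ρ).trace.re = spectralSum hσ hρ fun q p => g q * f p := by
  have coords := trace_conjTranspose_mul_cfc_mul_mul_cfc hσ hρ g f 1 1
  rw [conjTranspose_one, Matrix.one_mul, Matrix.mul_one] at coords
  simp only [coords, spectralSum, Complex.re_sum, Complex.star_def,
    ← Complex.normSq_eq_conj_mul_self, ← Complex.ofReal_mul, Complex.ofReal_re]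

theorem trace_re_eq_spectralSum (hσ : σ.IsHermitian) (hρ : ρ.IsHermitian) :
    ρ.trace.re = spectralSum hσ hρ fun _ p => p := by
  have coords := trace_cfc_mul_cfc_re hσ hρ (fun _ => 1) id
  simpa only [cfc_const_one ℝ σ hσ.isSelfAdjoint, cfc_id ℝ ρ hρ.isSelfAdjoint, Matrix.one_mul,
    one_mul, id_eq] using coords

theorem continuousOn_spectrum_real (f : ℝ → ℝ) (A : Matrix n n ℂ) :
    ContinuousOn f (spectrum ℝ A) :=
  (Matrix.finite_real_spectrum).continuousOn f

theorem SupportLE.normSq_eigenCoords_mul_eigenvalues_eq_zero (h : SupportLE ρ σ)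
    (hσ : σ.IsHermitian) (hρ : ρ.PosSemidef) {j : n} (hj : hσ.eigenvalues j = 0) (i : n) :
    Complex.normSq (eigenCoords hσ hρ.1 1 j i) * hρ.1.eigenvalues i = 0 := by
  let kerIndicator : ℝ → ℝ := fun x => if x = 0 then 1 else 0
  have mul_kernelProj : σ * cfc kerIndicator σ = 0 := by
    nth_rw 1 [← cfc_id ℝ σ hσ.isSelfAdjoint]
    rw [← cfc_mul _ _ σ (continuousOn_spectrum_real _ _) (continuousOn_spectrum_real _ _)]
    convert cfc_const_zero ℝ σ using 2
    ext x
    simp +contextual [kerIndicator]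
  have sum_eq_zero : spectralSum hσ hρ.1 (fun q p => kerIndicator q * p) = 0 := by
    have coords := trace_cfc_mul_cfc_re hσ hρ.1 kerIndicator id
    rw [cfc_id ℝ ρ hρ.1.isSelfAdjoint, trace_mul_comm, h _ mul_kernelProj, trace_zero,
      Complex.zero_re] at coords
    exact coords.symm
  have term_nonneg (j i : n) : 0 ≤ Complex.normSq (eigenCoords hσ hρ.1 1 j i) *
      (kerIndicator (hσ.eigenvalues j) * hρ.1.eigenvalues i) := by
    have := hρ.eigenvalues_nonneg i
    have := Complex.normSq_nonneg (eigenCoords hσ hρ.1 1 j i)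
    simp only [kerIndicator]
    positivity
  have row_eq_zero := (Finset.sum_eq_zero_iff_of_nonneg fun j _ =>
    Finset.sum_nonneg fun i _ => term_nonneg j i).mp sum_eq_zero j (Finset.mem_univ j)
  have := (Finset.sum_eq_zero_iff_of_nonneg fun i _ => term_nonneg j i).mp row_eq_zero i
    (Finset.mem_univ i)
  simpa [kerIndicator, hj] using this

end Spectral

section Variational

variable {n : Type*} [Fintype n]

/-- The concave functional `X ↦ 2 Re tr(X* ρ) - tr(X X* σ) - t tr(X* X ρ)`, whose maximum is
`⟨ρ, (L_σ + t R_ρ)⁻¹ ρ⟩` for the left and right multiplications `L_σ` and `R_ρ`. -/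
def variationalForm (ρ σ : Matrix n n ℂ) (t : ℝ) (X : Matrix n n ℂ) : ℝ :=
  2 * (Xᴴ * ρ).trace.re - (X * Xᴴ * σ).trace.re - t * (Xᴴ * X * ρ).trace.re

variable [DecidableEq n] {ρ σ : Matrix n n ℂ}

theorem variationalForm_eq_sum_eigenCoords (hσ : σ.IsHermitian) (hρ : ρ.IsHermitian) (t : ℝ)
    (X : Matrix n n ℂ) :
    variationalForm ρ σ t X = ∑ j, ∑ i,
      (2 * (star (eigenCoords hσ hρ X j i) * eigenCoords hσ hρ 1 j i).re * hρ.eigenvalues i -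
        (hσ.eigenvalues j + t * hρ.eigenvalues i) * Complex.normSq (eigenCoords hσ hρ X j i)) := by
  have linear := trace_conjTranspose_mul_cfc_mul_mul_cfc hσ hρ (fun _ => 1) id X 1
  have left := trace_conjTranspose_mul_cfc_mul_mul_cfc hσ hρ id (fun _ => 1) X X
  have right := trace_conjTranspose_mul_cfc_mul_mul_cfc hσ hρ (fun _ => 1) id X X
  simp only [cfc_const_one ℝ _ hσ.isSelfAdjoint, cfc_const_one ℝ _ hρ.isSelfAdjoint,
    cfc_id ℝ _ hρ.isSelfAdjoint, cfc_id ℝ _ hσ.isSelfAdjoint, id_eq, one_mul, mul_one]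
    at linear left right
  rw [variationalForm, linear, Matrix.mul_assoc X, trace_mul_comm X, left, right]
  simp only [Complex.re_sum, Finset.mul_sum, ← Finset.sum_sub_distrib]
  refine Finset.sum_congr rfl fun j _ => Finset.sum_congr rfl fun i _ => ?_
  simp only [Complex.re_mul_ofReal, Complex.star_def, ← Complex.normSq_eq_conj_mul_self,
    Complex.ofReal_re]
  ring

theorem two_mul_re_sub_mul_normSq_le {c p : ℝ} (u y : ℂ) (hc : 0 ≤ c)
    (h : c = 0 → Complex.normSq u * p = 0) :
    2 * (star y * u).re * p - c * Complex.normSq y ≤ Complex.normSq u * (p ^ 2 / c) := by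
  rcases hc.eq_or_lt with rfl | hc
  · rcases mul_eq_zero.mp (h rfl) with hu | hp
    · simp [Complex.normSq_eq_zero.mp hu]
    · simp [hp]
  · rw [← mul_div_assoc, le_div_iff₀ hc]
    simp only [Complex.normSq_apply, Complex.star_def, Complex.mul_re, Complex.conj_re,
      Complex.conj_im]
    nlinarith [sq_nonneg (c * y.re - p * u.re), sq_nonneg (c * y.im - p * u.im)]

theorem two_mul_re_sub_mul_normSq_optimum (c p : ℝ) (u : ℂ) :
    2 * (star (u * (p / c : ℝ)) * u).re * p - c * Complex.normSq (u * (p / c : ℝ)) =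
      Complex.normSq u * (p ^ 2 / c) := by
  have re_eq : (star (u * (p / c : ℝ)) * u).re = Complex.normSq u * (p / c) := by
    rw [star_mul', mul_right_comm, Complex.star_def, ← Complex.normSq_eq_conj_mul_self,
      Complex.conj_ofReal, ← Complex.ofReal_mul, Complex.ofReal_re]
  rw [re_eq, Complex.normSq_mul, Complex.normSq_ofReal]
  rcases eq_or_ne c 0 with rfl | hc
  · simp
  · field_simp
    ring

theorem isGreatest_variationalForm (hρ : ρ.PosSemidef) (hσ : σ.PosSemidef) (h : SupportLE ρ σ)
    {t : ℝ} (ht : 0 ≤ t) :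
    IsGreatest (Set.range (variationalForm ρ σ t))
      (spectralSum hσ.1 hρ.1 fun q p => p ^ 2 / (q + t * p)) := by
  constructor
  · obtain ⟨X, hX⟩ := eigenCoords_surjective hσ.1 hρ.1 <| of fun j i =>
      eigenCoords hσ.1 hρ.1 1 j i *
        (hρ.1.eigenvalues i / (hσ.1.eigenvalues j + t * hρ.1.eigenvalues i) : ℝ)
    refine ⟨X, ?_⟩
    simp only [variationalForm_eq_sum_eigenCoords hσ.1 hρ.1, hX, of_apply,
      two_mul_re_sub_mul_normSq_optimum, spectralSum]
  · rintro _ ⟨X, rfl⟩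
    rw [variationalForm_eq_sum_eigenCoords hσ.1 hρ.1, spectralSum]
    refine Finset.sum_le_sum fun j _ => Finset.sum_le_sum fun i _ => ?_
    have hq := hσ.eigenvalues_nonneg j
    have htp := mul_nonneg ht (hρ.eigenvalues_nonneg i)
    refine two_mul_re_sub_mul_normSq_le _ _ (add_nonneg hq htp) fun hc => ?_
    exact h.normSq_eigenCoords_mul_eigenvalues_eq_zero hσ.1 hρ
      ((add_eq_zero_iff_of_nonneg hq htp).mp hc).1 i

end Variational

section RelativeEntropy

variable {n : Type*} [Fintype n] [DecidableEq n] {ρ σ : Matrix n n ℂ}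

/-- Umegaki's relative entropy `tr ρ (log ρ - log σ)`, with the natural logarithm. Since
`Real.log 0 = 0`, it is meaningful only if the support of `ρ` is contained in that of `σ`. -/
noncomputable def relEntropy (ρ σ : Matrix n n ℂ) : ℝ :=
  (ρ * (cfc Real.log ρ - cfc Real.log σ)).trace.re

theorem mul_cfc_log_eq_cfc (hρ : ρ.IsHermitian) :
    ρ * cfc Real.log ρ = cfc (fun x => x * Real.log x) ρ := by
  nth_rw 1 [← cfc_id ℝ ρ hρ.isSelfAdjoint]
  exact (cfc_mul _ _ ρ (continuousOn_spectrum_real _ _) (continuousOn_spectrum_real _ _)).symm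

theorem relEntropy_eq_spectralSum (hσ : σ.IsHermitian) (hρ : ρ.IsHermitian) :
    relEntropy ρ σ = spectralSum hσ hρ fun q p => p * (Real.log p - Real.log q) := by
  have log_self := trace_cfc_mul_cfc_re hσ hρ (fun _ => 1) fun x => x * Real.log x
  have log_cross := trace_cfc_mul_cfc_re hσ hρ Real.log id
  rw [cfc_const_one ℝ σ hσ.isSelfAdjoint, Matrix.one_mul, ← mul_cfc_log_eq_cfc hρ] at log_self
  rw [cfc_id ℝ ρ hρ.isSelfAdjoint, trace_mul_comm] at log_cross
  rw [relEntropy, Matrix.mul_sub, trace_sub, Complex.sub_re, log_self, log_cross,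
    ← spectralSum_sub]
  congr! 3
  simp only [id_eq]
  ring

theorem tendsto_mul_log_add_sub_log_sub_log {p : ℝ} (hp : 0 ≤ p) (q : ℝ) :
    Tendsto (fun t => p * (Real.log (q + t * p) - Real.log q) - p * Real.log t) atTop
      (𝓝 (p * (Real.log p - Real.log q))) := by
  rcases hp.eq_or_lt with rfl | hp
  · simp
  have scaled : Tendsto (fun t : ℝ => q * t⁻¹ + p) atTop (𝓝 p) := by
    simpa using (tendsto_inv_atTop_zero.const_mul q).add_const p
  refine (((scaled.log hp.ne').sub_const (Real.log q)).const_mul p).congr' ?_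
  filter_upwards [eventually_gt_atTop 0, scaled.eventually_const_lt hp] with t ht hqp
  have factor : q + t * p = (q * t⁻¹ + p) * t := by field_simp
  rw [factor, Real.log_mul hqp.ne' ht.ne']
  ring

theorem tendsto_spectralSum_log_sub_trace_mul_log (hσ : σ.IsHermitian) (hρ : ρ.PosSemidef) :
    Tendsto (fun t => spectralSum hσ hρ.1 (fun q p => p * (Real.log (q + t * p) - Real.log q)) -
      ρ.trace.re * Real.log t) atTop (𝓝 (relEntropy ρ σ)) := by
  simp only [relEntropy_eq_spectralSum hσ hρ.1, trace_re_eq_spectralSum hσ hρ.1,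
    ← spectralSum_mul_const, ← spectralSum_sub]
  exact tendsto_finsetSum _ fun j _ => tendsto_finsetSum _ fun i _ =>
    (tendsto_mul_log_add_sub_log_sub_log (hρ.eigenvalues_nonneg i) _).const_mul _

theorem hasDerivAt_spectralSum_log (hρ : ρ.PosSemidef) (hσ : σ.PosSemidef) (h : SupportLE ρ σ)
    {t : ℝ} (ht : 0 ≤ t) :
    HasDerivAt
      (fun t => spectralSum hσ.1 hρ.1 fun q p => p * (Real.log (q + t * p) - Real.log q))
      (spectralSum hσ.1 hρ.1 fun q p => p ^ 2 / (q + t * p)) t := by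
  refine HasDerivAt.fun_sum fun j _ => HasDerivAt.fun_sum fun i _ => ?_
  rcases (hσ.eigenvalues_nonneg j).eq_or_lt with hq | hq
  · have weight_eq_zero := h.normSq_eigenCoords_mul_eigenvalues_eq_zero hσ.1 hρ hq.symm i
    simpa only [← mul_assoc, sq, mul_div_assoc, weight_eq_zero, zero_mul] using
      hasDerivAt_const t (0 : ℝ)
  · have log_arg_pos := add_pos_of_pos_of_nonneg hq (mul_nonneg ht (hρ.eigenvalues_nonneg i))
    have linear := ((hasDerivAt_id t).mul_const (hρ.1.eigenvalues i)).const_add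
      (hσ.1.eigenvalues j)
    refine ((((linear.log log_arg_pos.ne').sub_const _).const_mul _).const_mul _).congr_deriv ?_
    rw [id_eq]
    ring

end RelativeEntropy

section Marginal

variable {n N : Type*} [Fintype n] [DecidableEq n] [Fintype N] [DecidableEq N]
  {φ : Matrix n n ℂ →⋆ₐ[ℂ] Matrix N N ℂ} {ρ σ : Matrix N N ℂ} {ρ' σ' : Matrix n n ℂ}

/-- `ρ'` is the restriction of the state `ρ` to the subsystem whose observables `X` are embedded by
`φ` into those of the full system, i.e. `tr(φ(X) ρ) = tr(X ρ')`. -/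
def IsMarginal (φ : Matrix n n ℂ →⋆ₐ[ℂ] Matrix N N ℂ) (ρ : Matrix N N ℂ) (ρ' : Matrix n n ℂ) :
    Prop :=
  ∀ X, (φ X * ρ).trace = (X * ρ').trace

namespace IsMarginal

theorem trace_eq (h : IsMarginal φ ρ ρ') : ρ'.trace = ρ.trace := by
  simpa using (h 1).symm

theorem isHermitian (h : IsMarginal φ ρ ρ') (hρ : ρ.IsHermitian) : ρ'.IsHermitian := by
  refine ext_iff_trace_mul_left.mpr fun X => ?_
  calc (X * ρ'ᴴ).trace = star (Xᴴ * ρ').trace := by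
        rw [← trace_conjTranspose, conjTranspose_mul, conjTranspose_conjTranspose, trace_mul_comm]
    _ = star ((φ X)ᴴ * ρ).trace := by
        rw [← h, ← star_eq_conjTranspose, map_star, star_eq_conjTranspose]
    _ = (φ X * ρ).trace := by
        rw [← trace_conjTranspose, conjTranspose_mul, conjTranspose_conjTranspose, hρ.eq,
          trace_mul_comm]
    _ = (X * ρ').trace := h X

theorem posSemidef (h : IsMarginal φ ρ ρ') (hρ : ρ.PosSemidef) : ρ'.PosSemidef := by
  refine .of_dotProduct_mulVec_nonneg (h.isHermitian hρ.1) fun x => ?_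
  open scoped MatrixOrder in
  obtain ⟨B, hB⟩ := CStarAlgebra.nonneg_iff_eq_star_mul_self.mp
    (posSemidef_vecMulVec_self_star x).nonneg
  calc 0 ≤ (φ B * ρ * (φ B)ᴴ).trace := (hρ.mul_mul_conjTranspose_same _).trace_nonneg
    _ = (φ (vecMulVec x (star x)) * ρ).trace := by
        rw [hB, map_mul, map_star, star_eq_conjTranspose, Matrix.mul_assoc, trace_mul_comm,
          Matrix.mul_assoc, trace_mul_comm]
    _ = star x ⬝ᵥ ρ' *ᵥ x := by
        rw [h, vecMulVec_mul, trace_vecMulVec, dotProduct_comm, dotProduct_mulVec]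

theorem mul_eq_zero_iff (h : IsMarginal φ ρ ρ') (hρ : ρ.PosSemidef) (Y : Matrix n n ℂ) :
    ρ' * Y = 0 ↔ ρ * φ Y = 0 := by
  rw [mul_eq_zero_iff_trace_mul_mul_conjTranspose_eq_zero (h.posSemidef hρ),
    mul_eq_zero_iff_trace_mul_mul_conjTranspose_eq_zero hρ, ← h, map_mul, ← star_eq_conjTranspose,
    map_star, star_eq_conjTranspose]

theorem supportLE (hρ' : IsMarginal φ ρ ρ') (hσ' : IsMarginal φ σ σ') (hρ : ρ.PosSemidef)
    (hσ : σ.PosSemidef) (h : SupportLE ρ σ) : SupportLE ρ' σ' := fun Y hY =>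
  (hρ'.mul_eq_zero_iff hρ Y).mpr <| h _ <| (hσ'.mul_eq_zero_iff hσ Y).mp hY

theorem supportLE_map (h : IsMarginal φ ρ ρ') (hρ : ρ.PosSemidef) : SupportLE ρ (φ ρ') := by
  intro Z hZ
  have hρ' := (h.isHermitian hρ.1).isSelfAdjoint
  have regular : ρ' * (cfc (·⁻¹ : ℝ → ℝ) ρ' * ρ') = ρ' := by
    nth_rw 1 3 4 [← cfc_id ℝ ρ' hρ']
    rw [← cfc_mul _ _ ρ' (continuousOn_spectrum_real _ _) (continuousOn_spectrum_real _ _),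
      ← cfc_mul _ _ ρ' (continuousOn_spectrum_real _ _) (continuousOn_spectrum_real _ _)]
    congr 1
    ext x
    rw [id_eq, ← mul_assoc, mul_inv_mul_cancel]
  have mul_kernelProj : ρ * φ (1 - cfc (·⁻¹ : ℝ → ℝ) ρ' * ρ') = 0 := by
    rw [← h.mul_eq_zero_iff hρ, Matrix.mul_sub, Matrix.mul_one, regular, sub_self]
  have kernelProj_mul : φ (1 - cfc (·⁻¹ : ℝ → ℝ) ρ' * ρ') * Z = Z := by
    rw [map_sub, map_one, map_mul, Matrix.sub_mul, Matrix.one_mul, Matrix.mul_assoc, hZ,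
      Matrix.mul_zero, sub_zero]
  rw [← kernelProj_mul, ← Matrix.mul_assoc, mul_kernelProj, Matrix.zero_mul]

theorem variationalForm_map (hρ : IsMarginal φ ρ ρ') (hσ : IsMarginal φ σ σ') (t : ℝ)
    (X : Matrix n n ℂ) : variationalForm ρ σ t (φ X) = variationalForm ρ' σ' t X := by
  simp only [variationalForm, ← star_eq_conjTranspose, ← map_star, ← map_mul, hρ _, hσ _]

theorem spectralSum_resolvent_le (hρ' : IsMarginal φ ρ ρ') (hσ' : IsMarginal φ σ σ')
    (hρ : ρ.PosSemidef) (hσ : σ.PosSemidef) (h : SupportLE ρ σ) {t : ℝ} (ht : 0 ≤ t) :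
    (spectralSum (hσ'.isHermitian hσ.1) (hρ'.isHermitian hρ.1) fun q p => p ^ 2 / (q + t * p)) ≤
      spectralSum hσ.1 hρ.1 fun q p => p ^ 2 / (q + t * p) := by
  obtain ⟨⟨X, hX⟩, -⟩ := isGreatest_variationalForm (hρ'.posSemidef hρ) (hσ'.posSemidef hσ)
    (hρ'.supportLE hσ' hρ hσ h) ht
  rw [← hX, ← hρ'.variationalForm_map hσ']
  exact (isGreatest_variationalForm hρ hσ h ht).2 ⟨φ X, rfl⟩

theorem spectralSum_log_le (hρ' : IsMarginal φ ρ ρ') (hσ' : IsMarginal φ σ σ')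
    (hρ : ρ.PosSemidef) (hσ : σ.PosSemidef) (h : SupportLE ρ σ) {t : ℝ} (ht : 0 ≤ t) :
    (spectralSum (hσ'.isHermitian hσ.1) (hρ'.isHermitian hρ.1)
        fun q p => p * (Real.log (q + t * p) - Real.log q)) ≤
      spectralSum hσ.1 hρ.1 fun q p => p * (Real.log (q + t * p) - Real.log q) := by
  have deriv_marginal {s : ℝ} (hs : 0 ≤ s) := hasDerivAt_spectralSum_log (hρ'.posSemidef hρ)
    (hσ'.posSemidef hσ) (hρ'.supportLE hσ' hρ hσ h) hs
  have deriv_full {s : ℝ} (hs : 0 ≤ s) := hasDerivAt_spectralSum_log hρ hσ h hs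
  refine image_le_of_deriv_right_le_deriv_boundary (a := 0) (b := t)
    (fun s hs => (deriv_marginal hs.1).continuousAt.continuousWithinAt)
    (fun s hs => (deriv_marginal hs.1).hasDerivWithinAt) ?_
    (fun s hs => (deriv_full hs.1).continuousAt.continuousWithinAt)
    (fun s hs => (deriv_full hs.1).hasDerivWithinAt)
    (fun s hs => hρ'.spectralSum_resolvent_le hσ' hρ hσ h hs.1) ⟨ht, le_rfl⟩
  simp [spectralSum]

theorem relEntropy_le (hρ' : IsMarginal φ ρ ρ') (hσ' : IsMarginal φ σ σ')
    (hρ : ρ.PosSemidef) (hσ : σ.PosSemidef) (h : SupportLE ρ σ) :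
    relEntropy ρ' σ' ≤ relEntropy ρ σ := by
  refine le_of_tendsto_of_tendsto
    (tendsto_spectralSum_log_sub_trace_mul_log (hσ'.isHermitian hσ.1) (hρ'.posSemidef hρ))
    (tendsto_spectralSum_log_sub_trace_mul_log hσ.1 hρ) ?_
  filter_upwards [eventually_ge_atTop 0] with t ht
  rw [hρ'.trace_eq]
  exact sub_le_sub_right (hρ'.spectralSum_log_le hσ' hρ hσ h ht) _

end IsMarginal

end Marginal

section StrongSubadditivity

variable {n N : Type} [Fintype n] [DecidableEq n] [Fintype N] [DecidableEq N]

theorem vnEntropy_mul_log_two {ρ : Matrix n n ℂ} (hρ : ρ.IsHermitian) :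
    vnEntropy ρ * Real.log 2 = -(ρ * cfc Real.log ρ).trace.re := by
  rw [mul_cfc_log_eq_cfc hρ, hρ.cfc_eq, IsHermitian.cfc, Unitary.conjStarAlgAut_apply,
    trace_mul_cycle, Unitary.coe_star_mul_self, Matrix.one_mul, trace_diagonal, vnEntropy,
    dif_pos hρ, Complex.re_sum, Finset.sum_mul, ← Finset.sum_neg_distrib]
  refine Finset.sum_congr rfl fun i _ => ?_
  simp only [negxlog2, Function.comp_apply, Complex.coe_algebraMap, Complex.ofReal_re, neg_mul,
    mul_assoc, Real.logb, div_mul_cancel₀ _ (Real.log_pos one_lt_two).ne']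

theorem IsMarginal.relEntropy_map {φ : Matrix n n ℂ →⋆ₐ[ℂ] Matrix N N ℂ} {ρ : Matrix N N ℂ}
    {ρ' : Matrix n n ℂ} (h : IsMarginal φ ρ ρ') (hρ : ρ.IsHermitian) :
    relEntropy ρ (φ ρ') = (vnEntropy ρ' - vnEntropy ρ) * Real.log 2 := by
  have hρ' := h.isHermitian hρ
  have map_log : φ (cfc Real.log ρ') = cfc Real.log (φ ρ') :=
    φ.map_cfc Real.log ρ' (continuousOn_spectrum_real _ _)
      (LinearMap.continuous_of_finiteDimensional φ.toLinearMap) hρ'.isSelfAdjoint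
      (hρ'.isSelfAdjoint.map φ)
  rw [relEntropy, Matrix.mul_sub, trace_sub, Complex.sub_re, ← map_log, trace_mul_comm ρ (φ _), h,
    trace_mul_comm _ ρ', sub_mul, vnEntropy_mul_log_two hρ, vnEntropy_mul_log_two hρ']
  ring

theorem vnEntropy_add_le_of_isMarginal {n₁ n₂ n₁₂ : Type} [Fintype n₁] [DecidableEq n₁]
    [Fintype n₂] [DecidableEq n₂] [Fintype n₁₂] [DecidableEq n₁₂]
    {φ₁ : Matrix n₁ n₁ ℂ →⋆ₐ[ℂ] Matrix N N ℂ} {φ₂ : Matrix n₂ n₂ ℂ →⋆ₐ[ℂ] Matrix N N ℂ}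
    {ψ : Matrix n₁₂ n₁₂ ℂ →⋆ₐ[ℂ] Matrix n₂ n₂ ℂ} {ρ : Matrix N N ℂ} {ρ₁ : Matrix n₁ n₁ ℂ}
    {ρ₂ : Matrix n₂ n₂ ℂ} {ρ₁₂ : Matrix n₁₂ n₁₂ ℂ} (hρ : ρ.PosSemidef)
    (h₁ : IsMarginal φ₁ ρ ρ₁) (h₂ : IsMarginal φ₂ ρ ρ₂) (h₁₂ : IsMarginal ψ ρ₂ ρ₁₂)
    (square : IsMarginal φ₂ (φ₁ ρ₁) (ψ ρ₁₂)) :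
    vnEntropy ρ + vnEntropy ρ₁₂ ≤ vnEntropy ρ₁ + vnEntropy ρ₂ := by
  have map_posSemidef : (φ₁ ρ₁).PosSemidef := by
    open scoped MatrixOrder in
    exact (map_nonneg φ₁ (h₁.posSemidef hρ).nonneg).posSemidef
  have monotone := h₂.relEntropy_le square hρ map_posSemidef (h₁.supportLE_map hρ)
  rw [h₁.relEntropy_map hρ.1, h₁₂.relEntropy_map (h₂.isHermitian hρ.1)] at monotone
  have := le_of_mul_le_mul_right monotone (Real.log_pos one_lt_two)
  linarith

end StrongSubadditivity

section PartialTrace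

open scoped Kronecker

variable {n k N : Type*} [Fintype n] [DecidableEq n] [Fintype k] [DecidableEq k] [Fintype N]
  [DecidableEq N]

/-- The embedding `X ↦ X ⊗ 1` of the observables of the first factor of a bipartite system whose
basis is indexed by `N`, factorized by `e : N ≃ n × k`. -/
def ampliation (e : N ≃ n × k) : Matrix n n ℂ →⋆ₐ[ℂ] Matrix N N ℂ where
  toFun X := (X ⊗ₖ (1 : Matrix k k ℂ)).submatrix e e
  map_one' := by rw [one_kronecker_one, submatrix_one_equiv]
  map_mul' X Y := by
    rw [submatrix_mul_equiv, ← mul_kronecker_mul, Matrix.one_mul]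
  map_zero' := by rw [zero_kronecker, submatrix_zero, Pi.zero_apply, Pi.zero_apply]
  map_add' X Y := by rw [add_kronecker, submatrix_add, Pi.add_apply, Pi.add_apply]
  commutes' c := by
    simp [algebraMap_eq_diagonal, ← diagonal_one, diagonal_kronecker_diagonal, Pi.algebraMap_def,
      Function.comp_def]
  map_star' X := by
    rw [star_eq_conjTranspose, star_eq_conjTranspose, conjTranspose_submatrix,
      conjTranspose_kronecker, conjTranspose_one]

theorem ampliation_apply_apply (e : N ≃ n × k) (X : Matrix n n ℂ) (x y : N) :
    ampliation e X x y = if (e x).2 = (e y).2 then X (e x).1 (e y).1 else 0 := by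
  change X _ _ * (1 : Matrix k k ℂ) _ _ = _
  rw [one_apply, mul_ite, mul_one, mul_zero]

/-- The partial trace over the second factor of a bipartite system whose basis is indexed by `N`,
factorized by `e : N ≃ n × k`. -/
def partialTrace {R : Type*} [AddCommMonoid R] (e : N ≃ n × k) (ρ : Matrix N N R) : Matrix n n R :=
  of fun x y => ∑ c, ρ (e.symm (x, c)) (e.symm (y, c))

theorem isMarginal_ampliation (e : N ≃ n × k) (ρ : Matrix N N ℂ) :
    IsMarginal (ampliation e) ρ (partialTrace e ρ) := by
  intro X
  simp only [trace, diag_apply, mul_apply, ampliation_apply_apply, ite_mul, zero_mul,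
    partialTrace, of_apply, ← e.symm.sum_comp, Equiv.apply_symm_apply, Fintype.sum_prod_type,
    Finset.sum_ite_eq, Finset.mem_univ, if_true, Finset.mul_sum]
  exact Finset.sum_congr rfl fun x _ => Finset.sum_comm

end PartialTrace

section Parties

open Finset (inter_subset_left inter_subset_right subset_union_left subset_union_right)

variable {ι : Type} [DecidableEq ι] {d : ι → Type}

/-- Assignments of basis indices to the parties in `s`. -/
abbrev LocalIndex (d : ι → Type) (s : Finset ι) : Type := (i : {j // j ∈ s}) → d i.1

/-- The factorization of the basis of the parties in `u` into the parties in `s` and the rest. -/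
def splitEquiv {s u : Finset ι} (h : s ⊆ u) :
    LocalIndex d u ≃ LocalIndex d s × LocalIndex d (u \ s) where
  toFun x := (fun i => x ⟨i, h i.2⟩, fun i => x ⟨i, Finset.sdiff_subset i.2⟩)
  invFun x i := if hi : i.1 ∈ s then x.1 ⟨i, hi⟩ else x.2 ⟨i, Finset.mem_sdiff.mpr ⟨i.2, hi⟩⟩
  left_inv x := by ext i; simp
  right_inv x := by
    refine Prod.ext (funext fun i => dif_pos i.2) (funext fun i => ?_)
    exact dif_neg (Finset.mem_sdiff.mp i.2).2

theorem partialTrace_ampliation_splitEquiv [∀ i, Fintype (d i)] [∀ i, DecidableEq (d i)]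
    (s t : Finset ι) (σ : Matrix (LocalIndex d s) (LocalIndex d s) ℂ) :
    partialTrace (splitEquiv (subset_union_right (s₁ := s)))
        (ampliation (splitEquiv (subset_union_left (s₂ := t))) σ) =
      ampliation (splitEquiv (inter_subset_right (s₁ := s)))
        (partialTrace (splitEquiv (inter_subset_left (s₂ := t))) σ) := by
  let tracedEquiv : LocalIndex d ((s ∪ t) \ t) ≃ LocalIndex d (s \ (s ∩ t)) :=
    { toFun w i := w ⟨i, by grind⟩
      invFun w i := w ⟨i, by grind⟩ }
  have extend_left (x : LocalIndex d t) (w : LocalIndex d ((s ∪ t) \ t)) :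
      (splitEquiv subset_union_left ((splitEquiv subset_union_right).symm (x, w))).1 =
        (splitEquiv inter_subset_left).symm
          ((splitEquiv inter_subset_right x).1, tracedEquiv w) := by
    funext i
    by_cases hi : i.1 ∈ t <;> simp [splitEquiv, hi, tracedEquiv]
  have extend_rest_eq_iff (x y : LocalIndex d t) (w : LocalIndex d ((s ∪ t) \ t)) :
      (splitEquiv subset_union_left ((splitEquiv subset_union_right).symm (x, w))).2 =
          (splitEquiv subset_union_left ((splitEquiv subset_union_right).symm (y, w))).2 ↔
        (splitEquiv (inter_subset_right (s₁ := s)) x).2 = (splitEquiv inter_subset_right y).2 := by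
    simp only [splitEquiv, Equiv.coe_fn_mk, Equiv.coe_fn_symm_mk, funext_iff, Subtype.forall]
    grind
  ext x y
  simp only [partialTrace, of_apply, ampliation_apply_apply, extend_left, extend_rest_eq_iff]
  split_ifs
  · exact tracedEquiv.sum_comp fun w =>
      σ ((splitEquiv inter_subset_left).symm ((splitEquiv inter_subset_right x).1, w))
        ((splitEquiv inter_subset_left).symm ((splitEquiv inter_subset_right y).1, w))
  · exact Finset.sum_const_zero

/-- The factorization of the basis of the parties outside `s` into the parties in `u \ s` and
those outside `u`. -/
def splitComplEquiv {s u : Finset ι} (h : s ⊆ u) :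
    ((i : {j // j ∉ s}) → d i.1) ≃ LocalIndex d (u \ s) × ((i : {j // j ∉ u}) → d i.1) where
  toFun z := (fun i => z ⟨i, (Finset.mem_sdiff.mp i.2).2⟩, fun i => z ⟨i, fun hi => i.2 (h hi)⟩)
  invFun z i := if hi : i.1 ∈ u then z.1 ⟨i, Finset.mem_sdiff.mpr ⟨hi, i.2⟩⟩ else z.2 ⟨i, hi⟩
  left_inv z := by ext i; by_cases hi : i.1 ∈ u <;> simp [hi]
  right_inv z := by
    refine Prod.ext (funext fun i => ?_) (funext fun i => dif_neg i.2)
    exact dif_pos (Finset.mem_sdiff.mp i.2).1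

theorem combine_eq_combine_splitEquiv_symm {s u : Finset ι} (h : s ⊆ u) (x : LocalIndex d s)
    (z : (i : {j // j ∉ s}) → d i.1) :
    combine s x z =
      combine u ((splitEquiv h).symm (x, (splitComplEquiv h z).1)) (splitComplEquiv h z).2 := by
  funext i
  simp only [combine, splitEquiv, splitComplEquiv, Equiv.coe_fn_symm_mk, Equiv.coe_fn_mk]
  grind

variable [Fintype ι] [∀ i, Fintype (d i)]

theorem partialTrace_splitEquiv_pTr {s u : Finset ι} (h : s ⊆ u)
    (ρ : Matrix (∀ i, d i) (∀ i, d i) ℂ) : partialTrace (splitEquiv h) (pTr ρ u) = pTr ρ s := by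
  ext x y
  simp only [partialTrace, pTr, of_apply, combine_eq_combine_splitEquiv_symm h]
  rw [(splitComplEquiv h).sum_comp fun w : LocalIndex d (u \ s) × ((i : {j // j ∉ u}) → d i.1) =>
    ρ (combine u ((splitEquiv h).symm (x, w.1)) w.2) (combine u ((splitEquiv h).symm (y, w.1)) w.2),
    Fintype.sum_prod_type]

theorem posSemidef_pTr {ρ : Matrix (∀ i, d i) (∀ i, d i) ℂ} (hρ : ρ.PosSemidef) (s : Finset ι) :
    (pTr ρ s).PosSemidef := by
  have pTr_eq_sum : pTr ρ s = ∑ z, ρ.submatrix (combine s · z) (combine s · z) := by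
    ext x y
    simp only [pTr, Matrix.sum_apply, submatrix_apply]
  rw [pTr_eq_sum]
  exact posSemidef_sum _ fun z _ => hρ.submatrix _

variable [∀ i, DecidableEq (d i)]

theorem isMarginal_pTr (ρ : Matrix (∀ i, d i) (∀ i, d i) ℂ) {s u : Finset ι} (h : s ⊆ u) :
    IsMarginal (ampliation (splitEquiv h)) (pTr ρ u) (pTr ρ s) :=
  partialTrace_splitEquiv_pTr h ρ ▸ isMarginal_ampliation _ _

theorem Sv_union_add_Sv_inter_le {ρ : Matrix (∀ i, d i) (∀ i, d i) ℂ} (hρ : ρ.PosSemidef)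
    (s t : Finset ι) : Sv ρ (s ∪ t) + Sv ρ (s ∩ t) ≤ Sv ρ s + Sv ρ t := by
  refine vnEntropy_add_le_of_isMarginal (posSemidef_pTr hρ (s ∪ t))
    (isMarginal_pTr ρ subset_union_left) (isMarginal_pTr ρ subset_union_right)
    (isMarginal_pTr ρ inter_subset_right) ?_
  rw [← partialTrace_splitEquiv_pTr (inter_subset_left (s₁ := s) (s₂ := t)),
    ← partialTrace_ampliation_splitEquiv]
  exact isMarginal_ampliation _ _

theorem MI'_finest (ρ : Matrix (∀ i, d i) (∀ i, d i) ℂ) (s : Finset ι) :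
    MI' ρ (finest s) = ∑ i ∈ s, Sv ρ (s \ {i}) - ((s.card : ℝ) - 1) * Sv ρ s := by
  have sup_finest : (finest s).sup id = s := by
    rw [finest, Finset.sup_image]
    exact Finset.sup_singleton_eq_self s
  rw [MI', sup_finest, finest, Finset.sum_image Finset.singleton_injective.injOn,
    Finset.card_image_of_injective _ Finset.singleton_injective]

theorem MI'_finest_sub_MI'_finest_erase (ρ : Matrix (∀ i, d i) (∀ i, d i) ℂ) {s : Finset ι} {k : ι}
    (hk : k ∈ s) :
    MI' ρ (finest s) - MI' ρ (finest (s.erase k)) = ∑ i ∈ s.erase k,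
      (Sv ρ (s \ {i}) + Sv ρ (s \ {k}) - Sv ρ s - Sv ρ (s \ {i, k})) := by
  have erase_sdiff (i : ι) : s.erase k \ {i} = s \ {i, k} := by grind
  have card_erase : ((s.erase k).card : ℝ) = s.card - 1 := by
    rw [← Finset.card_erase_add_one hk, Nat.cast_succ, add_sub_cancel_right]
  rw [MI'_finest, MI'_finest, ← Finset.add_sum_erase s _ hk]
  simp only [erase_sdiff, Finset.sum_sub_distrib, Finset.sum_add_distrib, Finset.sum_const,
    nsmul_eq_mul, card_erase]
  rw [Finset.erase_eq s k]
  ring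

theorem Sv_add_Sv_sdiff_pair_le {ρ : Matrix (∀ i, d i) (∀ i, d i) ℂ} (hρ : ρ.PosSemidef)
    (s : Finset ι) {i k : ι} (hik : i ≠ k) :
    Sv ρ s + Sv ρ (s \ {i, k}) ≤ Sv ρ (s \ {i}) + Sv ρ (s \ {k}) := by
  have union_eq : s \ {i} ∪ s \ {k} = s := by grind
  have inter_eq : s \ {i} ∩ (s \ {k}) = s \ {i, k} := by grind
  simpa only [union_eq, inter_eq] using Sv_union_add_Sv_inter_le hρ (s \ {i}) (s \ {k})

theorem dualMutualInfo_diff_eq_and_nonneg_general {ρ : Matrix (∀ i, d i) (∀ i, d i) ℂ}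
    (hρ : ρ.PosSemidef) {s : Finset ι} {k : ι} (hk : k ∈ s) :
    MI' ρ (finest s) - MI' ρ (finest (s.erase k)) = ∑ i ∈ s.erase k,
        (Sv ρ (s \ {i}) + Sv ρ (s \ {k}) - Sv ρ s - Sv ρ (s \ {i, k})) ∧
      0 ≤ MI' ρ (finest s) - MI' ρ (finest (s.erase k)) := by
  have diff_eq := MI'_finest_sub_MI'_finest_erase ρ hk
  refine ⟨diff_eq, diff_eq ▸ Finset.sum_nonneg fun i hi => ?_⟩
  linarith [Sv_add_Sv_sdiff_pair_le hρ s (Finset.ne_of_mem_erase hi)]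

end Parties

/-- For every density operator on an `(n+1)`-partite Hilbert space (`n + 1 ≥ 3`
parties `A_0,…,A_n`),
`I'(A_0:⋯:A_n) - I'(A_0:⋯:A_{n-1})
  = Σ_{i≠n} ( S(Ā_i) + S(Ā_n) - S(A_0⋯A_n) - S(complement of A_iA_n) ) ≥ 0`. -/
theorem dualMutualInfo_diff_eq_and_nonneg
    {n : ℕ} (hn : 2 ≤ n) {d : Fin (n + 1) → Type}
    [∀ i, Fintype (d i)] [∀ i, DecidableEq (d i)]
    (ρ : Matrix (∀ i, d i) (∀ i, d i) ℂ) (hρ : IsDensity ρ) :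
    MI' ρ (finest Finset.univ) - MI' ρ (finest (Finset.univ.erase (Fin.last n)))
      = ∑ i ∈ Finset.univ.erase (Fin.last n),
          (Sv ρ (Finset.univ \ {i}) + Sv ρ (Finset.univ \ {Fin.last n})
            - Sv ρ Finset.univ - Sv ρ (Finset.univ \ {i, Fin.last n}))
    ∧ 0 ≤ MI' ρ (finest Finset.univ) - MI' ρ (finest (Finset.univ.erase (Fin.last n))) := by
  exact dualMutualInfo_diff_eq_and_nonneg_general hρ.1 (Finset.mem_univ _)
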